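/- arXiv:2602.15479 — 4 statements merged into one kernel-verified Lean document; each statement's English description precedes it below -/
import Mathlib

section
/- For every δ > 0 and every point (x,y) with x > -1, the quantities A = [β(α_x - α β_y) - 2α(β_x + α_y - β β_y)]/Δ and B = [2(α_x - α β_y) - β(β_x + α_y - β β_y)]/Δ both vanish, where α_x, α_y, β_x, β_y are the partial derivatives of α and β and Δ = 4α - β². -/
/-- Coefficient α of the δ-family. -/
noncomputable def alphaC (δ x y : ℝ) : ℝ := (y ^ 2 + δ ^ 2) / (1 + x) ^ 2

/-- Coefficient β of the δ-family. -/
noncomputable def betaC (x y : ℝ) : ℝ := -2 * y / (1 + x)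

/-- both components of the transport obstruction,
`A = [β(α_x - αβ_y) - 2α(β_x + α_y - ββ_y)]/Δ` and
`B = [2(α_x - αβ_y) - β(β_x + α_y - ββ_y)]/Δ` (with `Δ = 4α - β²`),
vanish at every point of Ω. -/
theorem stmt_7 (δ x y : ℝ) (hδ : 0 < δ) (hx : -1 < x) :
    ∃ ax ay bx by' : ℝ,
      HasDerivAt (fun t : ℝ => alphaC δ t y) ax x ∧
      HasDerivAt (fun t : ℝ => alphaC δ x t) ay y ∧
      HasDerivAt (fun t : ℝ => betaC t y) bx x ∧
      HasDerivAt (fun t : ℝ => betaC x t) by' y ∧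
      (betaC x y * (ax - alphaC δ x y * by')
          - 2 * alphaC δ x y * (bx + ay - betaC x y * by'))
        / (4 * alphaC δ x y - (betaC x y) ^ 2) = 0 ∧
      (2 * (ax - alphaC δ x y * by')
          - betaC x y * (bx + ay - betaC x y * by'))
        / (4 * alphaC δ x y - (betaC x y) ^ 2) = 0 := by
  have h : (1 + x) ≠ 0 := by linarith
  have hd : HasDerivAt (fun t : ℝ => 1 + t) 1 x := (hasDerivAt_id x).const_add 1
  have e1 : -2 * (y ^ 2 + δ ^ 2) / (1 + x) ^ 3
      - alphaC δ x y * (-2 / (1 + x)) = 0 := by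
    unfold alphaC
    field_simp
    ring
  have e2 : 2 * y / (1 + x) ^ 2 + 2 * y / (1 + x) ^ 2
      - betaC x y * (-2 / (1 + x)) = 0 := by
    unfold betaC
    field_simp
    ring
  refine ⟨-2 * (y ^ 2 + δ ^ 2) / (1 + x) ^ 3, 2 * y / (1 + x) ^ 2,
    2 * y / (1 + x) ^ 2, -2 / (1 + x), ?_, ?_, ?_, ?_, ?_, ?_⟩
  · unfold alphaC
    refine ((hasDerivAt_const x (y ^ 2 + δ ^ 2)).fun_div (hd.fun_pow 2)
      (pow_ne_zero 2 h)).congr_deriv ?_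
    field_simp
    ring
  · unfold alphaC
    refine ((((hasDerivAt_id y).fun_pow 2).add_const (δ ^ 2)).div_const
      ((1 + x) ^ 2)).congr_deriv ?_
    simp
  · unfold betaC
    refine ((hasDerivAt_const x (-2 * y)).fun_div hd h).congr_deriv ?_
    field_simp
    ring
  · unfold betaC
    refine (((hasDerivAt_id y).const_mul (-2)).div_const (1 + x)).congr_deriv ?_
    simp
  · rw [e1, e2]
    simp
  · rw [e1, e2]
    simp
end

section
/- Fix δ > 0 and let w = p + iq be a C¹ complex-valued function on the half-plane Ω = {(x,y) : x > -1} (p, q real-valued) satisfying the transport equation w_x + λ w_y = 0, where λ(x,y) = (y+iδ)/(1+x). Define a(x,y) = y/(1+x), b(x,y) = δ/(1+x), and set u = p - (a/b)q and v = q/b. Then (u,v) satisfies the system u_x - α v_y = 0 and v_x + u_y - β v_y = 0 on Ω, with α(x,y) = (y²+δ²)/(1+x)² and β(x,y) = -2y/(1+x). -/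
open Complex

/-- The spectral parameter λ of the δ-family. -/
noncomputable def lamC (δ x y : ℝ) : ℂ := ((y : ℂ) + δ * Complex.I) / (1 + x)

/-- Real part `a = y/(1+x)` of the spectral parameter. -/
noncomputable def aC (x y : ℝ) : ℝ := y / (1 + x)

/-- Imaginary part `b = δ/(1+x)` of the spectral parameter. -/
noncomputable def bC (δ x : ℝ) : ℝ := δ / (1 + x)

/-- if `w = p + iq` is a C¹ solution of the transport equation
`w_x + λ w_y = 0` on Ω, then `u = p - (a/b)q`, `v = q/b` satisfy the real system
`u_x - α v_y = 0`, `v_x + u_y - β v_y = 0` on Ω. -/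
theorem stmt_9 (δ : ℝ) (hδ : 0 < δ)
    (p q px py qx qy : ℝ → ℝ → ℝ)
    (hpx : ∀ x y : ℝ, -1 < x → HasDerivAt (fun t : ℝ => p t y) (px x y) x)
    (hpy : ∀ x y : ℝ, -1 < x → HasDerivAt (fun t : ℝ => p x t) (py x y) y)
    (hqx : ∀ x y : ℝ, -1 < x → HasDerivAt (fun t : ℝ => q t y) (qx x y) x)
    (hqy : ∀ x y : ℝ, -1 < x → HasDerivAt (fun t : ℝ => q x t) (qy x y) y)
    (hpxc : ContinuousOn (fun pt : ℝ × ℝ => px pt.1 pt.2) {pt : ℝ × ℝ | -1 < pt.1})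
    (hpyc : ContinuousOn (fun pt : ℝ × ℝ => py pt.1 pt.2) {pt : ℝ × ℝ | -1 < pt.1})
    (hqxc : ContinuousOn (fun pt : ℝ × ℝ => qx pt.1 pt.2) {pt : ℝ × ℝ | -1 < pt.1})
    (hqyc : ContinuousOn (fun pt : ℝ × ℝ => qy pt.1 pt.2) {pt : ℝ × ℝ | -1 < pt.1})
    (htransport : ∀ x y : ℝ, -1 < x →
      ((px x y : ℂ) + (qx x y : ℂ) * Complex.I)
        + lamC δ x y * ((py x y : ℂ) + (qy x y : ℂ) * Complex.I) = 0)
    (u v : ℝ → ℝ → ℝ)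
    (hu : ∀ x y : ℝ, u x y = p x y - (aC x y / bC δ x) * q x y)
    (hv : ∀ x y : ℝ, v x y = q x y / bC δ x) :
    ∀ x y : ℝ, -1 < x →
      ∃ Ux Uy Vx Vy : ℝ,
        HasDerivAt (fun t : ℝ => u t y) Ux x ∧
        HasDerivAt (fun t : ℝ => u x t) Uy y ∧
        HasDerivAt (fun t : ℝ => v t y) Vx x ∧
        HasDerivAt (fun t : ℝ => v x t) Vy y ∧
        Ux - alphaC δ x y * Vy = 0 ∧
        Vx + Uy - betaC x y * Vy = 0 := by
  intro x y hx
  have h1 : (1 + x) ≠ 0 := by linarith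
  have hd : δ ≠ 0 := hδ.ne'
  have ht : ((px x y : ℂ) + (qx x y : ℂ) * Complex.I) * (1 + x)
      + ((y : ℂ) + δ * Complex.I) * ((py x y : ℂ) + (qy x y : ℂ) * Complex.I) = 0 := by
    have h := htransport x y hx
    have h1c : (1 + (x : ℂ)) ≠ 0 := by exact_mod_cast h1
    unfold lamC at h
    field_simp at h
    linear_combination h
  have hre := congrArg Complex.re ht
  have him := congrArg Complex.im ht
  simp at hre him
  refine ⟨px x y - y / δ * qx x y, py x y - (1 / δ * q x y + y / δ * qy x y),
    (qx x y * (1 + x) + q x y * 1) / δ, qy x y * (1 + x) / δ, ?_, ?_, ?_, ?_, ?_, ?_⟩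
  · have h := (hpx x y hx).sub ((hqx x y hx).const_mul (y / δ))
    refine h.congr_of_eventuallyEq ?_
    filter_upwards [lt_mem_nhds hx] with t ht1
    have h2 : (1 + t) ≠ 0 := by linarith
    simp only [hu, aC, bC, Pi.sub_apply]
    field_simp
  · have h := (hpy x y hx).sub (((hasDerivAt_id y).div_const δ).mul (hqy x y hx))
    refine h.congr_of_eventuallyEq (Filter.Eventually.of_forall fun t => ?_)
    simp only [hu, aC, bC, Pi.sub_apply, Pi.mul_apply, id]
    field_simp
  · have h := ((hqx x y hx).mul ((hasDerivAt_id x).const_add 1)).div_const δ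
    refine h.congr_of_eventuallyEq ?_
    filter_upwards [lt_mem_nhds hx] with t ht1
    have h2 : (1 + t) ≠ 0 := by linarith
    simp only [hv, bC, Pi.mul_apply, id]
    field_simp
  · have h := ((hqy x y hx).mul_const (1 + x)).div_const δ
    refine h.congr_of_eventuallyEq (Filter.Eventually.of_forall fun t => ?_)
    simp only [hv, bC]
    field_simp
  · unfold alphaC
    field_simp
    linear_combination δ * hre - y * him
  · unfold betaC
    field_simp
    linear_combination him
end

section
/- Fix δ > 0 and define u(x,y) = -(y² + δ²)/(1+x)² and v(x,y) = 2y/(1+x) on the half-plane Ω = {(x,y) : x > -1}. Then (u,v) is a solution of the system: u_x - α v_y = 0 and v_x + u_y - β v_y = 0 at every point of Ω, where α(x,y) = (y²+δ²)/(1+x)² and β(x,y) = -2y/(1+x). (This is the real solution pair corresponding to w = λ².) -/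
/-- the explicit pair `u = -(y²+δ²)/(1+x)²`, `v = 2y/(1+x)`
solves the system `u_x - α v_y = 0`, `v_x + u_y - β v_y = 0` on Ω. -/
theorem stmt_13 (δ : ℝ) (hδ : 0 < δ) :
    ∀ x y : ℝ, -1 < x →
      ∃ ux uy vx vy : ℝ,
        HasDerivAt (fun t : ℝ => -((y ^ 2 + δ ^ 2) / (1 + t) ^ 2)) ux x ∧
        HasDerivAt (fun t : ℝ => -((t ^ 2 + δ ^ 2) / (1 + x) ^ 2)) uy y ∧
        HasDerivAt (fun t : ℝ => 2 * y / (1 + t)) vx x ∧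
        HasDerivAt (fun t : ℝ => 2 * t / (1 + x)) vy y ∧
        ux - alphaC δ x y * vy = 0 ∧
        vx + uy - betaC x y * vy = 0 := by
  intro x y hx
  have h : (1 + x) ≠ 0 := by linarith
  have h2 : (1 + x) ^ 2 ≠ 0 := pow_ne_zero 2 h
  have hd : HasDerivAt (fun t : ℝ => 1 + t) 1 x := (hasDerivAt_id x).const_add 1
  refine ⟨2 * (y ^ 2 + δ ^ 2) / (1 + x) ^ 3, -(2 * y / (1 + x) ^ 2),
    -(2 * y / (1 + x) ^ 2), 2 / (1 + x), ?_, ?_, ?_, ?_, ?_, ?_⟩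
  · have := ((hasDerivAt_const x (y ^ 2 + δ ^ 2)).fun_div (hd.fun_pow 2) h2).fun_neg
    refine this.congr_deriv ?_
    field_simp
    norm_num
    ring
  · have := ((((hasDerivAt_id' y).fun_pow 2).add_const (δ ^ 2)).div_const ((1 + x) ^ 2)).fun_neg
    refine this.congr_deriv ?_
    norm_num
  · have := (hasDerivAt_const x (2 * y)).fun_div hd h
    refine this.congr_deriv ?_
    field_simp
    ring
  · have := ((hasDerivAt_id' y).const_mul 2).div_const (1 + x)
    refine this.congr_deriv ?_
    norm_num
  · unfold alphaC
    field_simp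
    ring
  · unfold betaC
    field_simp
    ring
end

section
/- Fix δ > 0. Suppose w₁ and w₂ are C¹ complex-valued functions on an open connected neighborhood U ⊆ Ω of a segment of the line Γ = {x = 0}, both satisfying the transport equation w_x + λ w_y = 0 on U (with λ(x,y) = (y+iδ)/(1+x)) and agreeing on Γ ∩ U, and suppose every point of U is joined to Γ ∩ U by a characteristic curve y = C(1+x) lying in U. Then w₁ = w₂ on U. -/
open Complex

open Topology Filter

lemma holo_aux (δ : ℝ) (hδ : 0 < δ) (U : Set (ℝ × ℝ)) (hU : IsOpen U)
    (w wx wy : ℝ → ℝ → ℂ)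
    (hx : ∀ p ∈ U, HasDerivAt (fun t : ℝ => w t p.2) (wx p.1 p.2) p.1)
    (hy : ∀ p ∈ U, HasDerivAt (fun t : ℝ => w p.1 t) (wy p.1 p.2) p.2)
    (hxc : ContinuousOn (fun p : ℝ × ℝ => wx p.1 p.2) U)
    (hyc : ContinuousOn (fun p : ℝ × ℝ => wy p.1 p.2) U)
    (htr : ∀ p ∈ U, wx p.1 p.2 + lamC δ p.1 p.2 * wy p.1 p.2 = 0)
    (z : ℂ) (hz : -δ < z.im)
    (hzU : (δ * (δ + z.im)⁻¹ - 1, δ * (z.re * (δ + z.im)⁻¹)) ∈ U) :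
    DifferentiableAt ℂ
      (fun z : ℂ => w (δ * (δ + z.im)⁻¹ - 1) (δ * (z.re * (δ + z.im)⁻¹))) z := by
  have hpos : 0 < δ + z.im := by linarith
  have hnb := hU.mem_nhds hzU
  set p : ℝ × ℝ := (δ * (δ + z.im)⁻¹ - 1, δ * (z.re * (δ + z.im)⁻¹)) with hp
  have key := hasStrictFDerivAt_uncurry_coprod (𝕜 := ℝ) (u := p) (f := w)
    (f₁ := fun a b => ContinuousLinearMap.toSpanSingleton ℝ (wx a b))
    (f₂ := fun a b => ContinuousLinearMap.toSpanSingleton ℝ (wy a b))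
    (by filter_upwards [hnb] with v hv using (hx v hv).hasFDerivAt)
    (by filter_upwards [hnb] with v hv using (hy v hv).hasFDerivAt)
    ((ContinuousLinearMap.toSpanSingletonCLE (𝕜 := ℝ) (E := ℂ)).continuous.continuousAt.comp (hxc.continuousAt hnb))
    ((ContinuousLinearMap.toSpanSingletonCLE (𝕜 := ℝ) (E := ℂ)).continuous.continuousAt.comp (hyc.continuousAt hnb))
  have hg : HasFDerivAt (fun z : ℂ => (δ + z.im)⁻¹) (-((δ + z.im) ^ 2)⁻¹ • imCLM) z := 
    (hasDerivAt_inv hpos.ne').comp_hasFDerivAt (f := fun z : ℂ => δ + z.im) z (imCLM.hasFDerivAt.const_add δ)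
  have hX := (hg.const_mul δ).sub_const 1
  have hY := ((reCLM.hasFDerivAt (x := z)).mul hg).const_mul δ
  have key' : HasFDerivAt (fun p : ℝ × ℝ => w p.1 p.2)
      ((ContinuousLinearMap.toSpanSingleton ℝ (wx p.1 p.2)).coprod
        (ContinuousLinearMap.toSpanSingleton ℝ (wy p.1 p.2))) p := key.hasFDerivAt
  have hF := HasFDerivAt.comp (g := fun p : ℝ × ℝ => w p.1 p.2)
    (f := fun z : ℂ => (δ * (δ + z.im)⁻¹ - 1, δ * (z.re * (δ + z.im)⁻¹))) z key' (hX.prodMk hY)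
  have hF' : HasFDerivAt (fun z : ℂ => w (δ * (δ + z.im)⁻¹ - 1) (δ * (z.re * (δ + z.im)⁻¹))) _ z := hF
  rw [differentiableAt_complex_iff_differentiableAt_real]
  refine ⟨hF'.differentiableAt, ?_⟩
  rw [hF'.fderiv]
  have ht := htr p hzU
  have hne : (δ : ℂ) + z.im ≠ 0 := by exact_mod_cast hpos.ne'
  have hd : (δ : ℂ) ≠ 0 := by exact_mod_cast hδ.ne'
  have hl : lamC δ p.1 p.2 = z.re + I * (δ + z.im) := by
    simp only [lamC, hp]
    push_cast
    have h3 : 1 + ((δ : ℂ) * ((δ : ℂ) + z.im)⁻¹ - 1) = δ * ((δ : ℂ) + z.im)⁻¹ := by ring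
    rw [h3]
    field_simp
    try ring
  rw [hl] at ht
  have hwx : wx p.1 p.2 = -((z.re + I * (δ + z.im)) * wy p.1 p.2) := by linear_combination ht
  simp [hwx]
  field_simp
  ring

/-- uniqueness along characteristics. If `w₁, w₂` are C¹
solutions of the transport equation `w_x + λ w_y = 0` on an open connected
set `U ⊆ Ω` meeting the line `Γ = {x = 0}`, agreeing on `Γ ∩ U`, and every
point of `U` is joined to `Γ ∩ U` by a characteristic curve `y = C(1+x)`
lying in `U`, then `w₁ = w₂` on `U`. -/
theorem stmt_19 (δ : ℝ) (hδ : 0 < δ)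
    (U : Set (ℝ × ℝ)) (hUopen : IsOpen U) (hUconn : IsConnected U)
    (hUΩ : U ⊆ {p : ℝ × ℝ | -1 < p.1})
    (hUΓ : (U ∩ {p : ℝ × ℝ | p.1 = 0}).Nonempty)
    (w₁ w₂ : ℝ → ℝ → ℂ) (w1x w1y w2x w2y : ℝ → ℝ → ℂ)
    (hw1x : ∀ p ∈ U, HasDerivAt (fun t : ℝ => w₁ t p.2) (w1x p.1 p.2) p.1)
    (hw1y : ∀ p ∈ U, HasDerivAt (fun t : ℝ => w₁ p.1 t) (w1y p.1 p.2) p.2)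
    (hw2x : ∀ p ∈ U, HasDerivAt (fun t : ℝ => w₂ t p.2) (w2x p.1 p.2) p.1)
    (hw2y : ∀ p ∈ U, HasDerivAt (fun t : ℝ => w₂ p.1 t) (w2y p.1 p.2) p.2)
    (hw1xc : ContinuousOn (fun p : ℝ × ℝ => w1x p.1 p.2) U)
    (hw1yc : ContinuousOn (fun p : ℝ × ℝ => w1y p.1 p.2) U)
    (hw2xc : ContinuousOn (fun p : ℝ × ℝ => w2x p.1 p.2) U)
    (hw2yc : ContinuousOn (fun p : ℝ × ℝ => w2y p.1 p.2) U)
    (htr1 : ∀ p ∈ U, w1x p.1 p.2 + lamC δ p.1 p.2 * w1y p.1 p.2 = 0)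
    (htr2 : ∀ p ∈ U, w2x p.1 p.2 + lamC δ p.1 p.2 * w2y p.1 p.2 = 0)
    (hbd : ∀ p ∈ U, p.1 = 0 → w₁ p.1 p.2 = w₂ p.1 p.2)
    (hchar : ∀ p ∈ U, ∃ C : ℝ, p.2 = C * (1 + p.1) ∧
      ((0 : ℝ), C) ∈ U ∧ ∀ t ∈ Set.uIcc (0 : ℝ) p.1, (t, C * (1 + t)) ∈ U) :
    ∀ p ∈ U, w₁ p.1 p.2 = w₂ p.1 p.2 := by
  obtain ⟨⟨x0, c⟩, hc, hx0⟩ := hUΓ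
  simp only [Set.mem_ofPred_eq] at hx0
  subst hx0
  let Φ : ℂ → ℝ × ℝ := fun z => (δ * (δ + z.im)⁻¹ - 1, δ * (z.re * (δ + z.im)⁻¹))
  let ζ : ℝ × ℝ → ℂ := fun p => ⟨p.2 / (1 + p.1), δ / (1 + p.1) - δ⟩
  let V : Set ℂ := {z | -δ < z.im} ∩ Φ ⁻¹' U
  have hopen : IsOpen {z : ℂ | -δ < z.im} := isOpen_lt continuous_const continuous_im
  have hΦc : ContinuousOn Φ {z | -δ < z.im} := by
    have h1 : ContinuousOn (fun z : ℂ => (δ + z.im)⁻¹) {z | -δ < z.im} := by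
      apply ContinuousOn.inv₀ (by fun_prop)
      intro z hz
      simp only [Set.mem_ofPred_eq] at hz
      linarith
    have h2 : ContinuousOn (fun z : ℂ => z.re) {z | -δ < z.im} := by fun_prop
    exact ((h1.const_mul δ).sub continuousOn_const).prodMk ((h2.mul h1).const_mul δ)
  have hV : IsOpen V := hΦc.isOpen_inter_preimage hopen hUopen
  have hinv : ∀ p ∈ U, -δ < (ζ p).im ∧ Φ (ζ p) = p := by
    intro p hp
    have h1 : 0 < 1 + p.1 := by have := hUΩ hp; simp only [Set.mem_ofPred_eq] at this; linarith
    have h2 : 0 < δ / (1 + p.1) := by positivity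
    refine ⟨by simp only [ζ]; linarith, ?_⟩
    ext
    · simp only [Φ, ζ]
      field_simp
      ring
    · simp only [Φ, ζ]
      field_simp
      ring
  have hinv2 : ∀ z : ℂ, -δ < z.im → ζ (Φ z) = z := by
    intro z hz
    have h1 : 0 < δ + z.im := by linarith
    have h3 : 1 + (δ * (δ + z.im)⁻¹ - 1) = δ * (δ + z.im)⁻¹ := by ring
    apply Complex.ext
    · simp only [Φ, ζ, h3]
      field_simp
    · simp only [Φ, ζ, h3]
      field_simp
      ring
  have hVimg : V = ζ '' U := by
    ext z
    constructor
    · rintro ⟨h1, h2⟩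
      exact ⟨Φ z, h2, hinv2 z h1⟩
    · rintro ⟨p, hp, rfl⟩
      refine ⟨(hinv p hp).1, ?_⟩
      simp only [Set.mem_preimage]
      rw [(hinv p hp).2]
      exact hp
  have hζc : ContinuousOn ζ U := by
    have h1 : ContinuousOn (fun p : ℝ × ℝ => (1 + p.1)⁻¹) U := by
      apply ContinuousOn.inv₀ (by fun_prop)
      intro p hp
      have := hUΩ hp
      simp only [Set.mem_ofPred_eq] at this
      linarith
    have h2 : ContinuousOn (fun p : ℝ × ℝ => (p.2 / (1 + p.1), δ / (1 + p.1) - δ)) U := by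
      simp only [div_eq_mul_inv]
      exact (continuousOn_snd.mul h1).prodMk ((h1.const_mul δ).sub continuousOn_const)
    exact Complex.equivRealProdCLM.symm.continuous.comp_continuousOn h2
  have hVc : IsPreconnected V := hVimg ▸ hUconn.isPreconnected.image ζ hζc
  let F : ℂ → ℂ := fun z => w₁ (Φ z).1 (Φ z).2 - w₂ (Φ z).1 (Φ z).2
  have hFd : DifferentiableOn ℂ F V := by
    rintro z ⟨h1, h2⟩
    exact ((holo_aux δ hδ U hUopen w₁ w1x w1y hw1x hw1y hw1xc hw1yc htr1 z h1 h2).sub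
      (holo_aux δ hδ U hUopen w₂ w2x w2y hw2x hw2y hw2xc hw2yc htr2 z h1 h2)).differentiableWithinAt
  have hFa : AnalyticOnNhd ℂ F V := hFd.analyticOnNhd hV
  have hΦr : ∀ t : ℝ, Φ (t : ℂ) = (0, t) := by
    intro t
    ext
    · simp [Φ, hδ.ne']
    · simp only [Φ, ofReal_re, ofReal_im]
      field_simp
      ring
  have hcV : (c : ℂ) ∈ V := by
    refine ⟨by simpa using hδ, ?_⟩
    simp only [Set.mem_preimage, hΦr]
    exact hc
  have hev : ∀ᶠ t : ℝ in 𝓝[≠] c, F (t : ℂ) = 0 := by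
    have h1 : ∀ᶠ t in 𝓝 c, ((0 : ℝ), t) ∈ U :=
      (Continuous.prodMk_right (0 : ℝ)).continuousAt.eventually (hUopen.mem_nhds hc)
    filter_upwards [h1.filter_mono nhdsWithin_le_nhds] with t ht
    simp only [F, hΦr]
    exact sub_eq_zero.2 (hbd (0, t) ht rfl)
  have htend : Tendsto (fun t : ℝ => (t : ℂ)) (𝓝[≠] c) (𝓝[≠] (c : ℂ)) := by
    apply tendsto_nhdsWithin_of_tendsto_nhds_of_eventually_within
    · exact (continuous_ofReal.tendsto c).mono_left nhdsWithin_le_nhds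
    · filter_upwards [self_mem_nhdsWithin] with t ht
      simpa using ht
  have hzero := hFa.eqOn_zero_of_preconnected_of_frequently_eq_zero hVc hcV
    (htend.frequently hev.frequently)
  intro p hp
  have hz : F (ζ p) = 0 := hzero (hVimg ▸ ⟨p, hp, rfl⟩)
  simp only [F, (hinv p hp).2] at hz
  exact sub_eq_zero.1 hz
end
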